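/- arXiv:2302.07712 — 6 statements merged into one kernel-verified Lean document; each statement's English description precedes it below -/
import Mathlib

section
/- Let m ≥ n, let C ∈ ℝ^{m×n}, and let (U,H) be a polar decomposition of C, i.e. U ∈ St(m,n), H ∈ ℝ^{n×n} symmetric positive semidefinite, C = UH. Set λ = λ_min(H) (the smallest eigenvalue of H), so λ ≥ 0. Then for every X ∈ St(m,n) one has ⟨U,C⟩ − ⟨X,C⟩ ≥ (λ/2)·‖U − X‖_F². Moreover, if rank(C) = n, then λ > 0. -/
/-! With `D = U - X`, orthonormality of the columns of `U` and `X` gives `DᵀU + UᵀD = DᵀD`.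
Since `H` is symmetric, `tr(DᵀUH) = tr(UᵀDH)`, so `⟨U,C⟩ - ⟨X,C⟩ = tr(DᵀUH) = tr(DHDᵀ) / 2`.
The spectral theorem shows that `H - λI` is positive semidefinite, hence
`tr(DHDᵀ) ≥ λ tr(DDᵀ) = λ ‖D‖_F²`. If `C = UH` has rank `n`, then so has `H`, and all eigenvalues
of `H` are nonzero. -/

open Matrix

noncomputable section

/-- The Stiefel manifold St(m,n): real m×n matrices with orthonormal columns. -/
def Stiefel (m n : ℕ) : Set (Matrix (Fin m) (Fin n) ℝ) := {U | Uᵀ * U = 1}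

/-- Frobenius inner product ⟨A,B⟩ = trace(AᵀB). -/
def frobInner {m n : ℕ} (A B : Matrix (Fin m) (Fin n) ℝ) : ℝ := (Aᵀ * B).trace

/-- Frobenius norm. -/
def frobNorm {m n : ℕ} (A : Matrix (Fin m) (Fin n) ℝ) : ℝ := Real.sqrt (frobInner A A)

/-- Entrywise L1 norm of a matrix. -/
def entryL1 {m n : ℕ} (A : Matrix (Fin m) (Fin n) ℝ) : ℝ := ∑ i, ∑ j, |A i j|

/-- Entrywise sign of a matrix. -/
def sgnMatrix {m n : ℕ} (A : Matrix (Fin m) (Fin n) ℝ) : Matrix (Fin m) (Fin n) ℝ :=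
  Matrix.of fun i j => Real.sign (A i j)

/-- `U` is a U-factor of a polar decomposition of `C`: U ∈ St(m,n) and C = U*H with H
symmetric positive semidefinite. -/
def IsUFactor {m n : ℕ} (U C : Matrix (Fin m) (Fin n) ℝ) : Prop :=
  U ∈ Stiefel m n ∧ ∃ H : Matrix (Fin n) (Fin n) ℝ, H.PosSemidef ∧ C = U * H

/-- `S` is an entrywise subgradient sign matrix for `V`: S_ij = sgn(V_ij) whenever
V_ij ≠ 0 and S_ij ∈ [-1,1] otherwise. -/
def IsSignSubgrad {m n : ℕ} (S V : Matrix (Fin m) (Fin n) ℝ) : Prop :=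
  ∀ i j, (V i j ≠ 0 → S i j = Real.sign (V i j)) ∧ S i j ∈ Set.Icc (-1 : ℝ) 1

/-- A lower bound on the spectrum of a symmetric matrix is a lower bound in the Loewner order. -/
lemma posSemidef_sub_smul_one {n : ℕ} {H : Matrix (Fin n) (Fin n) ℝ} (hH : H.IsHermitian)
    (l : ℝ) (hl : ∀ i, l ≤ hH.eigenvalues i) : (H - l • (1 : Matrix (Fin n) (Fin n) ℝ)).PosSemidef := by
  have hd : (diagonal (fun i => hH.eigenvalues i - l)).PosSemidef :=
    posSemidef_diagonal_iff.mpr fun i => sub_nonneg.mpr (hl i)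
  have h := hd.mul_mul_conjTranspose_same (hH.eigenvectorUnitary : Matrix (Fin n) (Fin n) ℝ)
  have hs := hH.spectral_theorem
  rw [Unitary.conjStarAlgAut_apply] at hs
  have hu : (hH.eigenvectorUnitary : Matrix (Fin n) (Fin n) ℝ)
      * (hH.eigenvectorUnitary : Matrix (Fin n) (Fin n) ℝ)ᴴ = 1 :=
    Unitary.coe_mul_star_self _
  have hdiag : diagonal (fun i => hH.eigenvalues i - l)
      = diagonal (RCLike.ofReal ∘ hH.eigenvalues) - l • (1 : Matrix (Fin n) (Fin n) ℝ) := by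
    rw [smul_one_eq_diagonal, diagonal_sub]
    rfl
  rw [hdiag, mul_sub, sub_mul, mul_smul_comm, mul_one, smul_mul_assoc, hu] at h
  have hs' : H = (hH.eigenvectorUnitary : Matrix (Fin n) (Fin n) ℝ)
      * diagonal (RCLike.ofReal ∘ hH.eigenvalues)
      * (hH.eigenvectorUnitary : Matrix (Fin n) (Fin n) ℝ)ᴴ := hs
  rwa [← hs'] at h

lemma frobNorm_sq {m n : ℕ} (A : Matrix (Fin m) (Fin n) ℝ) : frobNorm A ^ 2 = frobInner A A :=
  Real.sq_sqrt (posSemidef_conjTranspose_mul_self A).trace_nonneg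

/-- The gap `⟨U,UH⟩ - ⟨X,UH⟩` is half of the quadratic form of `H` at `U - X`. -/
lemma frobInner_gap {m n : ℕ} {U X : Matrix (Fin m) (Fin n) ℝ} {H : Matrix (Fin n) (Fin n) ℝ}
    (hU : Uᵀ * U = 1) (hX : Xᵀ * X = 1) (hH : Hᵀ = H) :
    frobInner U (U * H) - frobInner X (U * H) = 1 / 2 * ((U - X) * H * (U - X)ᵀ).trace := by
  have hsym : (Uᵀ * X * H).trace = (Xᵀ * U * H).trace := by
    rw [← trace_transpose, transpose_mul, transpose_mul, transpose_transpose, hH, trace_mul_comm]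
  have hgram : (U - X)ᵀ * (U - X) = 1 - Uᵀ * X - Xᵀ * U + 1 := by
    rw [transpose_sub, Matrix.sub_mul, Matrix.mul_sub, Matrix.mul_sub, hU, hX]
    abel
  rw [trace_mul_comm, ← Matrix.mul_assoc, hgram]
  simp only [frobInner, add_mul, Matrix.sub_mul, trace_add, trace_sub, ← Matrix.mul_assoc, hsym, hU]
  ring

/-- error estimation for polar decomposition (Lemma 2.4). -/
theorem polar_decomposition_error_bound {m n : ℕ} (hmn : n ≤ m)
    (C U : Matrix (Fin m) (Fin n) ℝ) (H : Matrix (Fin n) (Fin n) ℝ)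
    (hU : U ∈ Stiefel m n) (hH : H.PosSemidef) (hC : C = U * H)
    (lam : ℝ)
    (hlam : IsLeast {x : ℝ | ∃ i : Fin n, hH.1.eigenvalues i = x} lam) :
    0 ≤ lam ∧
    (∀ X ∈ Stiefel m n,
      frobInner U C - frobInner X C ≥ lam / 2 * frobNorm (U - X) ^ 2) ∧
    (C.rank = n → 0 < lam) := by
  have hle : ∀ i, lam ≤ hH.1.eigenvalues i := fun i => hlam.2 ⟨i, rfl⟩
  obtain ⟨i₀, hi₀⟩ := hlam.1
  have h0 : 0 ≤ lam := hi₀ ▸ hH.eigenvalues_nonneg i₀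
  refine ⟨h0, fun X hX => ?_, fun hr => ?_⟩
  · have hp := ((posSemidef_sub_smul_one hH.1 lam hle).mul_mul_conjTranspose_same
      (U - X)).trace_nonneg
    rw [conjTranspose_eq_transpose_of_trivial, Matrix.mul_sub, Matrix.sub_mul, Matrix.mul_smul, Matrix.mul_one,
      Matrix.smul_mul, trace_sub, trace_smul, smul_eq_mul, trace_mul_comm (U - X)] at hp
    have hHt : Hᵀ = H := by
      rw [← conjTranspose_eq_transpose_of_trivial]
      exact hH.1
    rw [hC, frobInner_gap hU hX hHt, frobNorm_sq, frobInner]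
    linarith
  · have hrank : n ≤ H.rank := by
      rw [hC] at hr
      exact hr.symm.le.trans (rank_mul_le_right U H)
    refine h0.lt_of_ne' fun hz => ?_
    rw [hH.1.rank_eq_card_non_zero_eigs] at hrank
    have hlt : Fintype.card {i // hH.1.eigenvalues i ≠ 0} < Fintype.card (Fin n) :=
      Fintype.card_subtype_lt (x := i₀) (by simp [hi₀, hz])
    rw [Fintype.card_fin] at hlt
    omega
end
end

section
/- Let X = [x₁,…,x_n] ∈ ℝ^{d×n}, d ≥ K ≥ 1, and let sequences U^k ∈ St(d,K) and S^k ∈ ℝ^{n×K} satisfy, for every k: (i) S^k_{ij} = sgn((XᵀU^k)_{ij}) whenever (XᵀU^k)_{ij} ≠ 0 and S^k_{ij} ∈ [−1,1] otherwise; (ii) U^{k+1} maximizes ⟨XS^k, U⟩ over U ∈ St(d,K). Then the objective values F(U^k) = ‖XᵀU^k‖₁ are monotonically nondecreasing in k, and every limit point U* of {U^k} (i.e. every U* with U^{k_l} → U* along some subsequence) satisfies the first-order optimality criterion: there exists S* ∈ ℝ^{n×K} with S*_{ij} = sgn((XᵀU*)_{ij}) whenever (XᵀU*)_{ij} ≠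 0 and S*_{ij} ∈ [−1,1] otherwise, such that ⟨XS*, U* − Z⟩ ≥ 0 for all Z ∈ St(d,K). -/
/-!
Write `F U = ‖XᵀU‖₁`. A matrix `S` is an entrywise sign subgradient at `V` exactly when its entries
lie in `[-1, 1]` and `S i j * V i j = |V i j|` for all `i, j`, which is a closed condition on the
pair `(S, V)`. Hence `⟨S, V⟩ = ‖V‖₁`, while `⟨S, W⟩ ≤ ‖W‖₁` for every other `W`.

Monotonicity: `F (U k) = ⟨X S k, U k⟩ ≤ ⟨X S k, U (k+1)⟩ ≤ F (U (k+1))`.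

Limit points: if `U (φ l) → U*`, compactness of the box `[-1, 1]^(n × K)` lets `S (φ l)` converge
to some `S*` along a further subsequence, and closedness makes `S*` a sign subgradient at `XᵀU*`.
For `Z` on the Stiefel manifold, `⟨X S k, Z⟩ ≤ ⟨X S k, U (k+1)⟩ ≤ F (U (k+1)) ≤ F U*`, the last step
because `F (U k)` is nondecreasing and tends to `F U*` along a subsequence. Passing to the limit
gives `⟨X S*, Z⟩ ≤ F U* = ⟨X S*, U*⟩`.
-/

open Matrix

noncomputable section

lemma frobInner_eq_sum {m n : ℕ} (A B : Matrix (Fin m) (Fin n) ℝ) :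
    frobInner A B = ∑ i, ∑ j, A i j * B i j := by
  rw [Finset.sum_comm]
  simp [frobInner, Matrix.trace, Matrix.mul_apply]

lemma frobInner_mul_left {d n K : ℕ} (X : Matrix (Fin d) (Fin n) ℝ)
    (S : Matrix (Fin n) (Fin K) ℝ) (U : Matrix (Fin d) (Fin K) ℝ) :
    frobInner (X * S) U = frobInner S (Xᵀ * U) := by
  simp [frobInner, Matrix.transpose_mul, Matrix.mul_assoc]

/-- Sign subgradients in terms of closed conditions, so that they pass to limits. -/
lemma isSignSubgrad_iff {m n : ℕ} (S V : Matrix (Fin m) (Fin n) ℝ) :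
    IsSignSubgrad S V ↔ ∀ i j, S i j * V i j = |V i j| ∧ S i j ∈ Set.Icc (-1 : ℝ) 1 := by
  refine forall₂_congr fun i j => and_congr_left fun _ => ?_
  rcases lt_trichotomy (V i j) 0 with h | h | h
  · rw [Real.sign_of_neg h, abs_of_neg h]
    exact ⟨fun H => by rw [H h.ne]; ring,
      fun H _ => mul_right_cancel₀ h.ne (by linarith)⟩
  · simp [h]
  · rw [Real.sign_of_pos h, abs_of_pos h]
    exact ⟨fun H => by rw [H h.ne']; ring,
      fun H _ => mul_right_cancel₀ h.ne' (by linarith)⟩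

lemma IsSignSubgrad.frobInner_eq {m n : ℕ} {S V : Matrix (Fin m) (Fin n) ℝ}
    (h : IsSignSubgrad S V) : frobInner S V = entryL1 V := by
  rw [isSignSubgrad_iff] at h
  rw [frobInner_eq_sum]
  exact Finset.sum_congr rfl fun i _ => Finset.sum_congr rfl fun j _ => (h i j).1

lemma IsSignSubgrad.frobInner_le {m n : ℕ} {S V : Matrix (Fin m) (Fin n) ℝ}
    (h : IsSignSubgrad S V) (W : Matrix (Fin m) (Fin n) ℝ) : frobInner S W ≤ entryL1 W := by
  rw [frobInner_eq_sum]
  refine Finset.sum_le_sum fun i _ => Finset.sum_le_sum fun j _ => ?_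
  calc S i j * W i j ≤ |S i j| * |W i j| := by rw [← abs_mul]; exact le_abs_self _
    _ ≤ 1 * |W i j| := by
      gcongr
      exact abs_le.2 (h i j).2
    _ = |W i j| := one_mul _

lemma isCompact_signBox (m n : ℕ) :
    IsCompact {S : Matrix (Fin m) (Fin n) ℝ | ∀ i j, S i j ∈ Set.Icc (-1 : ℝ) 1} := by
  have h : IsCompact {S : Fin m → Fin n → ℝ | ∀ i j, S i j ∈ Set.Icc (-1 : ℝ) 1} := by
    simpa only [Set.pi, Set.mem_univ, true_imp_iff, Set.mem_ofPred_eq] using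
      isCompact_univ_pi fun _ : Fin m => isCompact_univ_pi fun _ : Fin n =>
        isCompact_Icc (a := (-1 : ℝ)) (b := 1)
  exact h

lemma continuous_entryL1 {m n : ℕ} :
    Continuous (entryL1 : Matrix (Fin m) (Fin n) ℝ → ℝ) := by
  unfold entryL1
  fun_prop

lemma continuous_frobInner_left {m n : ℕ} (B : Matrix (Fin m) (Fin n) ℝ) :
    Continuous fun A => frobInner A B := by
  unfold frobInner
  fun_prop

/-- monotonicity and subsequential convergence of the conditional
subgradient (CondGradU) form of the non-greedy algorithm for L1-norm PCA
(Proposition 3.3). -/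
theorem nga_monotone_and_subsequential_convergence {d n K : ℕ}
    (hK : 1 ≤ K) (hKd : K ≤ d)
    (X : Matrix (Fin d) (Fin n) ℝ)
    (U : ℕ → Matrix (Fin d) (Fin K) ℝ) (S : ℕ → Matrix (Fin n) (Fin K) ℝ)
    (hUSt : ∀ k, U k ∈ Stiefel d K)
    (hS : ∀ k, IsSignSubgrad (S k) (Xᵀ * U k))
    (hUmax : ∀ k, ∀ V ∈ Stiefel d K,
      frobInner (X * S k) V ≤ frobInner (X * S k) (U (k + 1))) :
    (∀ k, entryL1 (Xᵀ * U k) ≤ entryL1 (Xᵀ * U (k + 1))) ∧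
    (∀ (Ustar : Matrix (Fin d) (Fin K) ℝ) (φ : ℕ → ℕ), StrictMono φ →
      Filter.Tendsto (fun l => U (φ l)) Filter.atTop (nhds Ustar) →
      ∃ Sstar : Matrix (Fin n) (Fin K) ℝ, IsSignSubgrad Sstar (Xᵀ * Ustar) ∧
        ∀ Z ∈ Stiefel d K, 0 ≤ frobInner (X * Sstar) (Ustar - Z)) := by
  have hstep : ∀ k, frobInner (X * S k) (U (k + 1)) ≤ entryL1 (Xᵀ * U (k + 1)) := fun k => by
    rw [frobInner_mul_left]
    exact (hS k).frobInner_le _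
  have hmono : ∀ k, entryL1 (Xᵀ * U k) ≤ entryL1 (Xᵀ * U (k + 1)) := fun k => by
    rw [← (hS k).frobInner_eq, ← frobInner_mul_left]
    exact (hUmax k _ (hUSt k)).trans (hstep k)
  refine ⟨hmono, fun Ustar φ hφ hU => ?_⟩
  have hM : Monotone fun k => entryL1 (Xᵀ * U k) := monotone_nat_of_le_succ hmono
  have hF : Filter.Tendsto (fun l => entryL1 (Xᵀ * U (φ l))) Filter.atTop
      (nhds (entryL1 (Xᵀ * Ustar))) :=
    ((continuous_entryL1.comp (continuous_const.matrix_mul continuous_id)).tendsto Ustar).comp hU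
  have hbound : ∀ k, entryL1 (Xᵀ * U k) ≤ entryL1 (Xᵀ * Ustar) := fun k =>
    (hM (hφ.id_le k)).trans ((hM.comp hφ.monotone).ge_of_tendsto hF k)
  have : FirstCountableTopology (Matrix (Fin n) (Fin K) ℝ) :=
    inferInstanceAs (FirstCountableTopology (Fin n → Fin K → ℝ))
  obtain ⟨Sstar, hbox, ψ, hψ, hSψ⟩ := (isCompact_signBox n K).tendsto_subseq
    (x := fun l => S (φ l)) fun l i j => (hS (φ l) i j).2
  have hVψ : Filter.Tendsto (fun l => Xᵀ * U (φ (ψ l))) Filter.atTop (nhds (Xᵀ * Ustar)) :=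
    ((continuous_const.matrix_mul continuous_id).tendsto Ustar).comp
      (hU.comp hψ.tendsto_atTop)
  have hsub : IsSignSubgrad Sstar (Xᵀ * Ustar) := by
    rw [isSignSubgrad_iff]
    refine fun i j => ⟨?_, hbox i j⟩
    have hSij := ((continuous_id.matrix_elem i j).tendsto Sstar).comp hSψ
    have hVij := ((continuous_id.matrix_elem i j).tendsto (Xᵀ * Ustar)).comp hVψ
    refine tendsto_nhds_unique (hSij.mul hVij) (hVij.abs.congr fun l => ?_)
    exact (((isSignSubgrad_iff _ _).1 (hS (φ (ψ l))) i j).1).symm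
  refine ⟨Sstar, hsub, fun Z hZ => ?_⟩
  have hlim : frobInner (X * Sstar) Z ≤ entryL1 (Xᵀ * Ustar) :=
    le_of_tendsto' ((((continuous_frobInner_left Z).comp
      (continuous_const.matrix_mul continuous_id)).tendsto Sstar).comp hSψ)
      fun l => (hUmax (φ (ψ l)) Z hZ).trans ((hstep _).trans (hbound _))
  have hsplit : frobInner (X * Sstar) (Ustar - Z) =
      frobInner (X * Sstar) Ustar - frobInner (X * Sstar) Z := by
    simp [frobInner, Matrix.mul_sub]
  rw [hsplit, frobInner_mul_left X Sstar Ustar, hsub.frobInner_eq]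
  linarith
end
end

section
/- Let X ∈ ℝ^{d×n}, d ≥ K ≥ 1, and let {U^k} ⊂ St(d,K) be generated by the non-greedy algorithm: S^k = sgn(XᵀU^k) entrywise and U^{k+1} is a U-factor of a polar decomposition of XS^k. If rank(XS^k) = K for every k, then there exists k₀ such that U^k = U^{k₀} for all k ≥ k₀, and this stopping point U* = U^{k₀} is a FOC point: there exists S* ∈ ℝ^{n×K} with S*_{ij} = sgn((XᵀU*)_{ij}) whenever (XᵀU*)_{ij} ≠ 0 and S*_{ij} ∈ [−1,1] otherwise, such that U* is a U-factor of a polar decomposition of XS*. -/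
/-!
The objective `‖Xᵀ U‖₁` never decreases along the iteration. Put `a k = ⟨U (k+1), X S k⟩`, the
value of the linearized problem at step `k`. A `U`-factor of `C` maximizes `⟨V, C⟩` over the
Stiefel manifold (`IsUFactor.frobInner_le`) and sign matrices have entries in `[-1, 1]`
(`frobInner_mul_sgnMatrix_le`), so
`‖Xᵀ U k‖₁ = ⟨U k, X S k⟩ ≤ a k ≤ ‖Xᵀ U (k+1)‖₁ ≤ a (k+1)`.
As a maximum, `a k` depends only on `S k`, which takes finitely many values
(`finite_range_sgnMatrix`). Hence the monotone sequence `a` is eventually constant, and from then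
on `U (k+1)` and `U (k+2)` both maximize `⟨·, X S (k+1)⟩`. Full column rank makes that maximizer
unique (`IsUFactor.eq_of_frobInner_le`), so `U (k+1) = U (k+2)`. The FOC condition at the stopping
point is then the defining relation of the next iterate, with `S*` the current sign matrix.

Both maximality and uniqueness come from the identity
`tr ((V - U) H (V - U)ᵀ) = 2 (⟨U, C⟩ - ⟨V, C⟩)` for `C = U H` (`trace_sub_mul_mul_transpose_sub`).
-/

open Matrix

noncomputable section

/-- If `H` is positive definite, a matrix `W` with `tr (W H Wᵀ) ≤ 0` vanishes, because the diagonal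
entries of `W H Wᵀ` are the values of the quadratic form `H` on the rows of `W`. -/
lemma eq_zero_of_trace_mul_mul_transpose_nonpos {d K : ℕ} {H : Matrix (Fin K) (Fin K) ℝ}
    (hH : H.PosDef) (W : Matrix (Fin d) (Fin K) ℝ) (h : (W * H * Wᵀ).trace ≤ 0) : W = 0 := by
  have hdiag : ∀ i, (W * H * Wᵀ) i i = W i ⬝ᵥ (H *ᵥ W i) := by
    intro i
    rw [Matrix.mul_assoc]
    simp [Matrix.mul_apply, dotProduct, mulVec]
  have hnn : ∀ i, 0 ≤ (W * H * Wᵀ) i i := fun i => by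
    rw [hdiag]; simpa using hH.posSemidef.dotProduct_mulVec_nonneg (W i)
  have hz : (W * H * Wᵀ).trace = 0 :=
    le_antisymm h (Finset.sum_nonneg fun i _ => hnn i)
  have hall := (Finset.sum_eq_zero_iff_of_nonneg fun i _ => hnn i).1 hz
  ext i j
  have hi : W i = 0 := by
    by_contra hne
    have hp := hH.dotProduct_mulVec_pos hne
    have := hall i (Finset.mem_univ i)
    rw [hdiag] at this
    simp [this] at hp
  simp [hi]

/-- The gap `⟨U, C⟩ - ⟨V, C⟩` between two points of the Stiefel manifold, for `C = U H` with `H`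
symmetric, is half the squared distance from `U` to `V` measured with the quadratic form `H`. -/
lemma trace_sub_mul_mul_transpose_sub {d K : ℕ} {U V C : Matrix (Fin d) (Fin K) ℝ}
    {H : Matrix (Fin K) (Fin K) ℝ} (hU : U ∈ Stiefel d K) (hV : V ∈ Stiefel d K)
    (hH : H.IsHermitian) (hC : C = U * H) :
    ((V - U) * H * (V - U)ᵀ).trace = 2 * (frobInner U C - frobInner V C) := by
  have hHt : Hᵀ = H := by
    rw [← Matrix.conjTranspose_eq_transpose_of_trivial]; exact hH
  have hU' : Uᵀ * U = 1 := hU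
  have hV' : Vᵀ * V = 1 := hV
  have h1 : ∀ A B : Matrix (Fin d) (Fin K) ℝ, (A * H * Bᵀ).trace = (Bᵀ * A * H).trace := by
    intro A B
    rw [Matrix.trace_mul_comm, Matrix.mul_assoc]
  have h2 : (Uᵀ * V * H).trace = (Vᵀ * U * H).trace := by
    rw [← Matrix.trace_transpose, Matrix.transpose_mul, Matrix.transpose_mul,
      Matrix.transpose_transpose, hHt, Matrix.trace_mul_comm]
  have e : (V - U) * H * (V - U)ᵀ
      = V * H * Vᵀ - V * H * Uᵀ - U * H * Vᵀ + U * H * Uᵀ := by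
    simp only [Matrix.transpose_sub, Matrix.sub_mul, Matrix.mul_sub]; abel
  rw [e, Matrix.trace_add, Matrix.trace_sub, Matrix.trace_sub, h1, h1, h1, h1, h2, hU', hV', hC,
    frobInner, frobInner, ← Matrix.mul_assoc, ← Matrix.mul_assoc, hU']
  ring

/-- A `U`-factor of `C` maximizes `V ↦ ⟨V, C⟩` over the Stiefel manifold. -/
lemma IsUFactor.frobInner_le {d K : ℕ} {U V C : Matrix (Fin d) (Fin K) ℝ}
    (hU : IsUFactor U C) (hV : V ∈ Stiefel d K) : frobInner V C ≤ frobInner U C := by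
  obtain ⟨hU, H, hH, hC⟩ := hU
  have key := trace_sub_mul_mul_transpose_sub hU hV hH.isHermitian hC
  have := (hH.mul_mul_conjTranspose_same (V - U)).trace_nonneg
  rw [Matrix.conjTranspose_eq_transpose_of_trivial] at this
  linarith

/-- The full-rank hypothesis makes the symmetric factor positive definite, so the maximizer of
`V ↦ ⟨V, C⟩` over the Stiefel manifold is unique. -/
lemma IsUFactor.eq_of_frobInner_le {d K : ℕ} {U V C : Matrix (Fin d) (Fin K) ℝ}
    (hU : IsUFactor U C) (hC : C.rank = K) (hV : V ∈ Stiefel d K)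
    (h : frobInner U C ≤ frobInner V C) : V = U := by
  obtain ⟨hU, H, hH, hCH⟩ := hU
  have hr : K ≤ H.rank := by
    have := Matrix.rank_mul_le_right U H
    rwa [← hCH, hC] at this
  have hunit : IsUnit H := by
    rw [← Matrix.linearIndependent_cols_iff_isUnit]
    rw [linearIndependent_iff_card_le_finrank_span, Fintype.card_fin, Set.finrank,
      ← Matrix.rank_eq_finrank_span_cols]
    exact hr
  have hpd : H.PosDef := hH.posDef_iff_isUnit.2 hunit
  have key := trace_sub_mul_mul_transpose_sub hU hV hH.isHermitian hCH
  exact sub_eq_zero.1 (eq_zero_of_trace_mul_mul_transpose_nonpos hpd _ (by linarith))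

lemma frobInner_mul_eq_sum {d n K : ℕ} (X : Matrix (Fin d) (Fin n) ℝ)
    (U : Matrix (Fin d) (Fin K) ℝ) (S : Matrix (Fin n) (Fin K) ℝ) :
    frobInner U (X * S) = ∑ i, ∑ j, (Xᵀ * U) i j * S i j := by
  have : Uᵀ * (X * S) = (Xᵀ * U)ᵀ * S := by
    rw [Matrix.transpose_mul, Matrix.transpose_transpose, Matrix.mul_assoc]
  rw [frobInner, this, Finset.sum_comm]
  rfl

lemma real_sign_mem (x : ℝ) : Real.sign x ∈ ({-1, 0, 1} : Set ℝ) := by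
  rcases Real.sign_apply_eq x with h | h | h <;> simp [h]

lemma sgnMatrix_mem_Icc {m n : ℕ} (A : Matrix (Fin m) (Fin n) ℝ) (i : Fin m) (j : Fin n) :
    sgnMatrix A i j ∈ Set.Icc (-1 : ℝ) 1 := by
  rcases Real.sign_apply_eq (A i j) with h | h | h <;> simp [sgnMatrix, h]

/-- `⟨U, X sgn(Xᵀ U)⟩` is the objective value `‖Xᵀ U‖₁`. -/
lemma frobInner_mul_sgnMatrix {d n K : ℕ} (X : Matrix (Fin d) (Fin n) ℝ)
    (U : Matrix (Fin d) (Fin K) ℝ) :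
    frobInner U (X * sgnMatrix (Xᵀ * U)) = entryL1 (Xᵀ * U) := by
  rw [frobInner_mul_eq_sum, entryL1]
  refine Finset.sum_congr rfl fun i _ => Finset.sum_congr rfl fun j _ => ?_
  rw [sgnMatrix, Matrix.of_apply]
  generalize (Xᵀ * U) i j = x
  rcases lt_trichotomy x 0 with h | h | h
  · rw [Real.sign_of_neg h, abs_of_neg h]; ring
  · simp [h]
  · rw [Real.sign_of_pos h, abs_of_pos h]; ring

lemma frobInner_mul_sgnMatrix_le {d n K : ℕ} (X : Matrix (Fin d) (Fin n) ℝ)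
    (U : Matrix (Fin d) (Fin K) ℝ) (A : Matrix (Fin n) (Fin K) ℝ) :
    frobInner U (X * sgnMatrix A) ≤ entryL1 (Xᵀ * U) := by
  rw [frobInner_mul_eq_sum, entryL1]
  refine Finset.sum_le_sum fun i _ => Finset.sum_le_sum fun j _ => (le_abs_self _).trans ?_
  rw [abs_mul]
  exact mul_le_of_le_one_right (abs_nonneg _) (abs_le.2 (sgnMatrix_mem_Icc A i j))

lemma finite_range_sgnMatrix (m n : ℕ) :
    (Set.range (sgnMatrix : Matrix (Fin m) (Fin n) ℝ → _)).Finite := by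
  have h : (Set.univ.pi fun _ : Fin m => Set.univ.pi fun _ : Fin n =>
      ({-1, 0, 1} : Set ℝ)).Finite :=
    Set.Finite.pi fun _ => Set.Finite.pi fun _ => by simp
  refine h.subset ?_
  rintro _ ⟨A, rfl⟩ i - j -
  exact real_sign_mem (A i j)

/-- finite-step convergence of the non-greedy algorithm under the full
column rank assumption rank(X·S^k) = K (Theorem 3.4). -/
theorem nga_finite_step_convergence {d n K : ℕ} (hK : 1 ≤ K) (hKd : K ≤ d)
    (X : Matrix (Fin d) (Fin n) ℝ)
    (U : ℕ → Matrix (Fin d) (Fin K) ℝ) (S : ℕ → Matrix (Fin n) (Fin K) ℝ)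
    (hU0 : U 0 ∈ Stiefel d K)
    (hS : ∀ k, S k = sgnMatrix (Xᵀ * U k))
    (hU : ∀ k, IsUFactor (U (k + 1)) (X * S k))
    (hrank : ∀ k, (X * S k).rank = K) :
    ∃ k₀ : ℕ, (∀ k, k₀ ≤ k → U k = U k₀) ∧
      ∃ Sstar : Matrix (Fin n) (Fin K) ℝ,
        IsSignSubgrad Sstar (Xᵀ * U k₀) ∧ IsUFactor (U k₀) (X * Sstar) := by
  have hSt : ∀ k, U k ∈ Stiefel d K := by
    intro k
    cases k with
    | zero => exact hU0
    | succ k => exact (hU k).1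
  -- The value `a k` lies between the objective values at `U k` and at `U (k + 1)`.
  let a : ℕ → ℝ := fun k => frobInner (U (k + 1)) (X * S k)
  have hlow : ∀ k, entryL1 (Xᵀ * U k) ≤ a k := by
    intro k
    rw [← frobInner_mul_sgnMatrix, ← hS]
    exact (hU k).frobInner_le (hSt k)
  have hupp : ∀ k, a k ≤ entryL1 (Xᵀ * U (k + 1)) := by
    intro k
    simp only [a, hS k]
    exact frobInner_mul_sgnMatrix_le X _ _
  have hmono : Monotone a := monotone_nat_of_le_succ fun k => (hupp k).trans (hlow (k + 1))
  -- By maximality of `U`-factors, `a k` depends only on the sign matrix `S k`.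
  have hle : ∀ k l, S k = S l → a k ≤ a l := by
    intro k l h
    simp only [a, h]
    exact (hU l).frobInner_le (hSt _)
  have hfac : Function.FactorsThrough a S := fun k l h =>
    le_antisymm (hle k l h) (hle l k h.symm)
  have hSfin : (Set.range S).Finite := by
    refine (finite_range_sgnMatrix n K).subset ?_
    rintro _ ⟨k, rfl⟩
    exact ⟨_, (hS k).symm⟩
  have hafin : (Set.range a).Finite := by
    rw [← hfac.extend_comp (fun _ => (0 : ℝ)), Set.range_comp]
    exact hSfin.image _
  obtain ⟨_, ⟨k₀, rfl⟩, hmax⟩ :=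
    Set.exists_max_image (Set.range a) id hafin (Set.range_nonempty a)
  have hmax' : ∀ k, a k ≤ a k₀ := fun k => hmax _ ⟨k, rfl⟩
  have hstep : ∀ k, k₀ + 1 ≤ k → U k = U (k + 1) := by
    intro k hk
    obtain ⟨m, rfl⟩ : ∃ m, k = m + 1 := ⟨k - 1, by omega⟩
    refine (hU (m + 1)).eq_of_frobInner_le (hrank (m + 1)) (hSt _) ?_
    calc a (m + 1) ≤ a k₀ := hmax' _
      _ ≤ a m := hmono (by omega)
      _ ≤ entryL1 (Xᵀ * U (m + 1)) := hupp m
      _ = frobInner (U (m + 1)) (X * S (m + 1)) := by rw [hS, frobInner_mul_sgnMatrix]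
  refine ⟨k₀ + 1, fun k hk => ?_, S (k₀ + 1), fun i j => ?_, ?_⟩
  · induction k, hk using Nat.le_induction with
    | base => rfl
    | succ k hk ih => rw [← hstep k hk, ih]
  · rw [hS]
    exact ⟨fun _ => rfl, sgnMatrix_mem_Icc _ i j⟩
  · have h := hU (k₀ + 1)
    rwa [← hstep (k₀ + 1) le_rfl] at h
end
end

section
/- Let X = [x₁,…,x_n] ∈ ℝ^{d×n}, d ≥ K ≥ 1, and let {(U^k, S^k)} be generated by the non-greedy algorithm under a fixed deterministic PD-selection: S^k = sgn(XᵀU^k) entrywise and U^{k+1} = p(XS^k), where p assigns to each matrix C ∈ ℝ^{d×K} a fixed U-factor p(C) ∈ St(d,K) of a polar decomposition of C. Assume F(U⁰,S⁰) = ⟨XᵀU⁰, S⁰⟩ > 0. Then there exists a positive integer k₀ such that for all k ≥ k₀ and all indices i,j, whenever x_iᵀu_j^{k+1} ≠ 0 it holds that S^{k+1}_{ij} = S^k_{ij} (where U^{k+1} = [u₁^{k+1},…,u_K^{k+1}]). -/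
/-!
Write `G k = ‖Xᵀ Uᵏ‖₁ = ⟨Xᵀ Uᵏ, Sᵏ⟩`. A U-factor of `C` maximizes `⟨·, C⟩` over the Stiefel manifold
(`IsUFactor.frobInner_le`), so
`G k ≤ ⟨Xᵀ Uᵏ⁺¹, Sᵏ⟩ ≤ ⟨Xᵀ Uᵏ⁺¹, Sᵏ⁺¹⟩ = G (k + 1)`.
There are only finitely many sign matrices and `Uᵏ⁺¹` is a function of `Sᵏ`, so the nondecreasing
sequence `G (k + 1)` takes finitely many values and is eventually constant. From then on both
inequalities are equalities; the second one, `∑ (Xᵀ Uᵏ⁺¹)ᵢⱼ Sᵏᵢⱼ = ∑ |(Xᵀ Uᵏ⁺¹)ᵢⱼ|`, forces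
`Sᵏᵢⱼ` to be the sign of `(Xᵀ Uᵏ⁺¹)ᵢⱼ` wherever the latter is nonzero.
-/

open Matrix

noncomputable section

lemma frobInner_transpose_mul {d n K : ℕ} (X : Matrix (Fin d) (Fin n) ℝ)
    (U : Matrix (Fin d) (Fin K) ℝ) (S : Matrix (Fin n) (Fin K) ℝ) :
    frobInner (Xᵀ * U) S = frobInner U (X * S) := by
  simp [frobInner, Matrix.mul_assoc]

lemma two_mul_frobInner_le {m n : ℕ} (A B : Matrix (Fin m) (Fin n) ℝ) :
    2 * frobInner A B ≤ frobInner A A + frobInner B B := by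
  simp only [frobInner_eq_sum, Finset.mul_sum, ← Finset.sum_add_distrib]
  refine Finset.sum_le_sum fun i _ => Finset.sum_le_sum fun j _ => ?_
  nlinarith [sq_nonneg (A i j - B i j)]

open scoped MatrixOrder in
/-- A U-factor of `C` maximizes `⟨·, C⟩` over the Stiefel manifold: with `C = U * (Bᵀ * B)`,
`⟨W, C⟩ = ⟨W * Bᵀ, U * Bᵀ⟩`, and `W * Bᵀ`, `U * Bᵀ` both have squared norm `‖B‖² = ⟨U, C⟩`. -/
lemma IsUFactor.frobInner_le_s7 {m n : ℕ} {U C W : Matrix (Fin m) (Fin n) ℝ}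
    (h : IsUFactor U C) (hW : W ∈ Stiefel m n) : frobInner W C ≤ frobInner U C := by
  obtain ⟨hU, H, hH, rfl⟩ := h
  obtain ⟨B, rfl⟩ : ∃ B : Matrix (Fin n) (Fin n) ℝ, H = Bᵀ * B := by
    obtain ⟨B, hB⟩ := CStarAlgebra.nonneg_iff_eq_star_mul_self.mp hH.nonneg
    exact ⟨B, by rw [hB, star_eq_conjTranspose, conjTranspose_eq_transpose_of_trivial]⟩
  have inner_eq : ∀ V : Matrix (Fin m) (Fin n) ℝ,
      frobInner V (U * (Bᵀ * B)) = frobInner (V * Bᵀ) (U * Bᵀ) := by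
    intro V
    simp only [frobInner, transpose_mul, transpose_transpose]
    rw [Matrix.mul_assoc B, Matrix.trace_mul_comm B]
    simp only [Matrix.mul_assoc]
  have norm_eq : ∀ V ∈ Stiefel m n, frobInner (V * Bᵀ) (V * Bᵀ) = (B * Bᵀ).trace := by
    intro V hV
    have hV' : Vᵀ * V = 1 := hV
    simp only [frobInner, transpose_mul, transpose_transpose]
    rw [Matrix.mul_assoc B, ← Matrix.mul_assoc Vᵀ, hV', Matrix.one_mul]
  rw [inner_eq, inner_eq, norm_eq U hU]
  have := two_mul_frobInner_le (W * Bᵀ) (U * Bᵀ)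
  rw [norm_eq W hW, norm_eq U hU] at this
  linarith

lemma mul_sign_eq_abs (x : ℝ) : x * Real.sign x = |x| := by
  rcases lt_trichotomy x 0 with h | rfl | h
  · simp [Real.sign_of_neg h, abs_of_neg h]
  · simp
  · simp [Real.sign_of_pos h, abs_of_pos h]

lemma mul_sign_le_abs (x y : ℝ) : x * Real.sign y ≤ |x| := by
  rcases Real.sign_apply_eq y with h | h | h <;> simp [h, neg_le_abs, le_abs_self]

lemma sign_eq_of_mul_sign_eq_abs {x y : ℝ} (hx : x ≠ 0) (h : x * Real.sign y = |x|) :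
    Real.sign x = Real.sign y :=
  mul_left_cancel₀ hx ((mul_sign_eq_abs x).trans h.symm)

lemma frobInner_sgnMatrix_self {m n : ℕ} (V : Matrix (Fin m) (Fin n) ℝ) :
    frobInner V (sgnMatrix V) = entryL1 V := by
  simp [frobInner_eq_sum, sgnMatrix, entryL1, mul_sign_eq_abs]

lemma frobInner_sgnMatrix_le {m n : ℕ} (V W : Matrix (Fin m) (Fin n) ℝ) :
    frobInner V (sgnMatrix W) ≤ entryL1 V := by
  rw [frobInner_eq_sum]
  exact Finset.sum_le_sum fun i _ => Finset.sum_le_sum fun j _ => mul_sign_le_abs _ _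

/-- The equality case of `frobInner_sgnMatrix_le`. -/
lemma sgnMatrix_eq_of_entryL1_le {m n : ℕ} {V W : Matrix (Fin m) (Fin n) ℝ}
    (h : entryL1 V ≤ frobInner V (sgnMatrix W)) {i : Fin m} {j : Fin n} (hij : V i j ≠ 0) :
    sgnMatrix V i j = sgnMatrix W i j := by
  have heq := (frobInner_sgnMatrix_le V W).antisymm h
  rw [frobInner_eq_sum, entryL1] at heq
  have hrow := (Finset.sum_eq_sum_iff_of_le fun i _ =>
    Finset.sum_le_sum fun j _ => mul_sign_le_abs (V i j) (W i j)).mp heq i (Finset.mem_univ i)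
  have hentry := (Finset.sum_eq_sum_iff_of_le fun j _ =>
    mul_sign_le_abs (V i j) (W i j)).mp hrow j (Finset.mem_univ j)
  exact sign_eq_of_mul_sign_eq_abs hij hentry

/-- item 1 of Theorem 3.7 — along the non-greedy algorithm with a fixed
deterministic polar-decomposition selection p, the sign variable eventually stabilizes
on the entries where XᵀU^{k+1} is nonzero. -/
theorem nga_sign_eventually_stable {d n K : ℕ} (hK : 1 ≤ K) (hKd : K ≤ d)
    (X : Matrix (Fin d) (Fin n) ℝ)
    (p : Matrix (Fin d) (Fin K) ℝ → Matrix (Fin d) (Fin K) ℝ)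
    (hp : ∀ C, IsUFactor (p C) C)
    (U : ℕ → Matrix (Fin d) (Fin K) ℝ) (S : ℕ → Matrix (Fin n) (Fin K) ℝ)
    (hU0 : U 0 ∈ Stiefel d K)
    (hS : ∀ k, S k = sgnMatrix (Xᵀ * U k))
    (hU : ∀ k, U (k + 1) = p (X * S k))
    (hF0 : 0 < frobInner (Xᵀ * U 0) (S 0)) :
    ∃ k₀ : ℕ, 0 < k₀ ∧ ∀ k, k₀ ≤ k → ∀ i j,
      (Xᵀ * U (k + 1)) i j ≠ 0 → S (k + 1) i j = S k i j := by
  have hSt : ∀ k, U k ∈ Stiefel d K := by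
    rintro (_ | k)
    · exact hU0
    · rw [hU]; exact (hp _).1
  have hstep : ∀ k, entryL1 (Xᵀ * U k) ≤ frobInner (Xᵀ * U (k + 1)) (S k) := by
    intro k
    rw [← frobInner_sgnMatrix_self, ← hS, frobInner_transpose_mul, frobInner_transpose_mul, hU]
    exact (hp _).frobInner_le_s7 (hSt k)
  have hmono : Monotone fun k => entryL1 (Xᵀ * U k) := monotone_nat_of_le_succ fun k =>
    (hstep k).trans (by rw [hS k]; exact frobInner_sgnMatrix_le _ _)
  have hfin : (Set.range fun k => entryL1 (Xᵀ * U (k + 1))).Finite := by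
    refine ((finite_range_sgnMatrix n K).image fun T => entryL1 (Xᵀ * p (X * T))).subset ?_
    rintro _ ⟨k, rfl⟩
    exact ⟨S k, ⟨Xᵀ * U k, (hS k).symm⟩, by simp only [hU]⟩
  obtain ⟨_, ⟨m, rfl⟩, hmax⟩ := Set.exists_max_image _ id hfin (Set.range_nonempty _)
  refine ⟨m + 1, m.succ_pos, fun k hk i j hij => ?_⟩
  -- The objective is already maximal at step `m + 1`, so the ascent at step `k` is not strict.
  have hle : entryL1 (Xᵀ * U (k + 1)) ≤ entryL1 (Xᵀ * U k) :=
    (hmax _ ⟨k, rfl⟩).trans (hmono hk)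
  rw [hS (k + 1), hS k]
  exact sgnMatrix_eq_of_entryL1_le (hS k ▸ hle.trans (hstep k)) hij
end
end

section
/- Let X ∈ ℝ^{d×n}, d ≥ K ≥ 1, let τ > 0, and let {(U^k, S^k)} be generated by S-PNGA: U^{k+1} is a U-factor of a polar decomposition of XS^k, and S^{k+1} = sgn(τS^k + XᵀU^{k+1}) entrywise, with initializer S⁰ ∈ {−1,0,1}^{n×K} and F(U⁰,S⁰) = ⟨XᵀU⁰, S⁰⟩ ≥ 0. Then there exists k₀ > 0 such that S^k = S^{k₀} for all k ≥ k₀. -/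
/-!
Let `a k = ⟨U (k+1), X * S k⟩`. A U-factor of `C` maximizes `⟨V, C⟩` over `V ∈ St(d,K)`
(`frobInner_le_of_isUFactor`), so `a k` is a function of `S k` alone, and
`a (k+1) ≥ ⟨U (k+1), X * S (k+1)⟩ = a k + ⟨Xᵀ * U (k+1), S (k+1) - S k⟩`.

Entrywise, for `s ∈ {-1, 0, 1}` and `s' = sgn(τ s + v)`, the gain `v (s' - s)` is nonnegative, and
positive as soon as `s' ≠ s` (`sign_step_gain`). Hence `a` is monotone, with `a k < a (k+1)` whenever
`S (k+1) ≠ S k`. Since `S` takes values in a finite set, so does `a`; past an index at which `a`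
attains its maximum, `S` can no longer move.

The argument uses only that the linear term strictly increases at each move, not that the sign
update maximizes the proximal objective over `{-1, 0, 1}`: for `s = 0` and `0 < v < τ / 2` the update
gives `s' = 1`, where the proximal objective is `v - τ / 2 < 0`, less than its value `0` at `s`.
-/


open Matrix

noncomputable section

/-- A U-factor of `C` maximizes `⟨V, C⟩` over the Stiefel manifold: with `C = U * H`, the trace of the
positive semidefinite matrix `(V - U) * H * (V - U)ᵀ` is `2 * (⟨U, C⟩ - ⟨V, C⟩)`. -/
lemma frobInner_le_of_isUFactor {m n : ℕ} {U V C : Matrix (Fin m) (Fin n) ℝ}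
    (hU : IsUFactor U C) (hV : V ∈ Stiefel m n) : frobInner V C ≤ frobInner U C := by
  obtain ⟨hU, H, hH, rfl⟩ := hU
  change Uᵀ * U = 1 at hU
  change Vᵀ * V = 1 at hV
  have hsym : Hᵀ = H := by simpa using hH.1.eq
  have h0 : 0 ≤ ((V - U) * H * (V - U)ᵀ).trace := by
    simpa using (hH.mul_mul_conjTranspose_same (V - U)).trace_nonneg
  have h1 : (V * H * Vᵀ).trace = H.trace := by
    rw [Matrix.trace_mul_comm, ← Matrix.mul_assoc, hV, Matrix.one_mul]
  have h2 : (U * H * Uᵀ).trace = H.trace := by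
    rw [Matrix.trace_mul_comm, ← Matrix.mul_assoc, hU, Matrix.one_mul]
  have h3 : (U * H * Vᵀ).trace = (Vᵀ * (U * H)).trace := Matrix.trace_mul_comm _ _
  have h4 : (V * H * Uᵀ).trace = (Vᵀ * (U * H)).trace := by
    rw [← h3, ← Matrix.trace_transpose (U * H * Vᵀ)]
    simp [Matrix.transpose_mul, hsym, Matrix.mul_assoc]
  have h5 : (Uᵀ * (U * H)).trace = H.trace := by
    rw [← Matrix.mul_assoc, hU, Matrix.one_mul]
  simp only [Matrix.sub_mul, Matrix.mul_sub, Matrix.transpose_sub, Matrix.trace_sub] at h0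
  simp only [frobInner]
  linarith

lemma frobInner_mul_right {d n K : ℕ} (X : Matrix (Fin d) (Fin n) ℝ)
    (U : Matrix (Fin d) (Fin K) ℝ) (S : Matrix (Fin n) (Fin K) ℝ) :
    frobInner U (X * S) = ∑ j, ∑ i, (Xᵀ * U) i j * S i j := by
  have : Uᵀ * (X * S) = (Xᵀ * U)ᵀ * S := by
    simp [Matrix.transpose_mul, Matrix.mul_assoc]
  rw [frobInner, this]
  simp only [Matrix.trace, Matrix.diag, Matrix.mul_apply (M := (Xᵀ * U)ᵀ), Matrix.transpose_apply]

/-- The sign update strictly increases the linear objective `v * s` whenever it changes `s`. -/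
lemma sign_step_gain {τ s v : ℝ} (hτ : 0 < τ) (hs : s ∈ ({-1, 0, 1} : Set ℝ))
    (hne : Real.sign (τ * s + v) ≠ s) : v * s < v * Real.sign (τ * s + v) := by
  rcases lt_trichotomy (τ * s + v) 0 with h | h | h
  · rw [Real.sign_of_neg h] at hne ⊢
    rcases hs with rfl | rfl | rfl
    · exact absurd rfl hne
    · linarith
    · linarith
  · rw [h, Real.sign_zero] at hne ⊢
    rcases hs with rfl | rfl | rfl
    · linarith
    · exact absurd rfl hne
    · linarith
  · rw [Real.sign_of_pos h] at hne ⊢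
    rcases hs with rfl | rfl | rfl
    · linarith
    · linarith
    · exact absurd rfl hne

/-- item 1 of Theorem 3.13 — the sign variable of S-PNGA (the non-greedy
algorithm with a proximal term of parameter τ > 0 on the sign subproblem) becomes
constant after finitely many steps. -/
theorem spnga_sign_finite_step_convergence {d n K : ℕ} (hK : 1 ≤ K) (hKd : K ≤ d)
    (X : Matrix (Fin d) (Fin n) ℝ) (τ : ℝ) (hτ : 0 < τ)
    (U : ℕ → Matrix (Fin d) (Fin K) ℝ) (S : ℕ → Matrix (Fin n) (Fin K) ℝ)
    (hU0 : U 0 ∈ Stiefel d K)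
    (hS0 : ∀ i j, S 0 i j ∈ ({-1, 0, 1} : Set ℝ))
    (hF0 : 0 ≤ frobInner (Xᵀ * U 0) (S 0))
    (hU : ∀ k, IsUFactor (U (k + 1)) (X * S k))
    (hS : ∀ k, S (k + 1) = sgnMatrix (τ • S k + Xᵀ * U (k + 1))) :
    ∃ k₀ : ℕ, 0 < k₀ ∧ ∀ k, k₀ ≤ k → S k = S k₀ := by
  have hmem : ∀ k i j, S k i j ∈ ({-1, 0, 1} : Set ℝ) := by
    intro k i j
    cases k with
    | zero => exact hS0 i j
    | succ k =>
      rw [hS k]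
      exact Real.sign_apply_eq ((τ • S k + Xᵀ * U (k + 1)) i j)
  have hentry : ∀ k i j, S (k + 1) i j = Real.sign (τ * S k i j + (Xᵀ * U (k + 1)) i j) := by
    intro k i j
    rw [hS k]
    simp [sgnMatrix]
  let a : ℕ → ℝ := fun k => frobInner (U (k + 1)) (X * S k)
  have hgain : ∀ k i j, S (k + 1) i j ≠ S k i j →
      (Xᵀ * U (k + 1)) i j * S k i j < (Xᵀ * U (k + 1)) i j * S (k + 1) i j := by
    intro k i j hne
    rw [hentry] at hne ⊢
    exact sign_step_gain hτ (hmem k i j) hne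
  have hgain' : ∀ k i j,
      (Xᵀ * U (k + 1)) i j * S k i j ≤ (Xᵀ * U (k + 1)) i j * S (k + 1) i j := by
    intro k i j
    by_cases h : S (k + 1) i j = S k i j
    · rw [h]
    · exact (hgain k i j h).le
  have hnext : ∀ k, frobInner (U (k + 1)) (X * S (k + 1)) ≤ a (k + 1) := fun k =>
    frobInner_le_of_isUFactor (hU (k + 1)) (hU k).1
  have hmono : Monotone a := monotone_nat_of_le_succ fun k => by
    refine le_trans ?_ (hnext k)
    simp only [a, frobInner_mul_right]
    exact Finset.sum_le_sum fun j _ => Finset.sum_le_sum fun i _ => hgain' k i j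
  have hstrict : ∀ k, S (k + 1) ≠ S k → a k < a (k + 1) := by
    intro k hne
    refine lt_of_lt_of_le ?_ (hnext k)
    obtain ⟨i, j, hij⟩ : ∃ i j, S (k + 1) i j ≠ S k i j := by
      by_contra! h
      exact hne (Matrix.ext h)
    simp only [a, frobInner_mul_right]
    exact Finset.sum_lt_sum
      (fun j _ => Finset.sum_le_sum fun i _ => hgain' k i j)
      ⟨j, Finset.mem_univ _, Finset.sum_lt_sum (fun i _ => hgain' k i j)
        ⟨i, Finset.mem_univ _, hgain k i j hij⟩⟩
  have hfinS : (Set.range S).Finite := by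
    have hpi : (Set.univ.pi fun _ : Fin n => Set.univ.pi fun _ : Fin K =>
        ({-1, 0, 1} : Set ℝ)).Finite :=
      Set.Finite.pi fun _ => Set.Finite.pi fun _ => Set.toFinite _
    refine hpi.subset ?_
    rintro _ ⟨k, rfl⟩ i _ j _
    exact hmem k i j
  -- `a k` is the maximum of `⟨V, X * S k⟩` over `V ∈ St(d,K)`, hence depends on `S k` only.
  have hfactor : Function.FactorsThrough a S := by
    intro k l h
    refine le_antisymm ?_ ?_
    · simpa only [a, h] using frobInner_le_of_isUFactor (hU l) (hU k).1
    · simpa only [a, h] using frobInner_le_of_isUFactor (hU k) (hU l).1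
  have hfin : (Set.range a).Finite := by
    rw [← hfactor.extend_comp (fun _ => 0), Set.range_comp]
    exact hfinS.image _
  obtain ⟨_, ⟨N, rfl⟩, hN⟩ := Set.exists_max_image _ id hfin (Set.range_nonempty a)
  have hstep : ∀ k, N ≤ k → S (k + 1) = S k := by
    intro k hk
    by_contra hne
    exact absurd ((hmono hk).trans_lt (hstrict k hne)) (not_lt.2 (hN _ ⟨k + 1, rfl⟩))
  refine ⟨N + 1, N.succ_pos, fun k hk => ?_⟩
  induction k, hk using Nat.le_induction with
  | base => rfl
  | succ k hk ih => rw [hstep k (by omega), ih]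
end
end

section
/- Let X = [x₁,…,x_n] ∈ ℝ^{d×n} and consider S-PAMe with K = 1: s^{k+1} = sgn(τs^k + Xᵀe^k) entrywise, u^{k+1} = Xs^{k+1}/‖Xs^{k+1}‖, and e^{k+1} = u^{k+1} − γ(u^k − u^{k+1}), where s^k ∈ {−1,0,1}^n, τ > 0, γ ∈ [0,1), and the initializer u⁰ (a unit vector) satisfies ‖Xᵀu⁰‖₁ ≠ 0. Then there exist thresholds for τ and γ, namely constants γ̄ > 0 and τ₀ > 0 such that whenever 0 ≤ γ < γ̄ and 0 < τ < τ₀: after at most ⌈4F^max/(τ(1−γ))⌉ steps the iterates (u^k, s^k) no longer change, where F^max = max_{‖u‖=1} ‖Xᵀu‖₁, and the stopping point u* is a FOC point: there exists s* with s*_i = sgn(x_iᵀu*) whenever x_iᵀu* ≠ 0 and s*_i ∈ [−1,1] otherwise, such that Xs* = h·u* for some h ≥ 0. -/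
/-!
From step 1 on, every `u k` lies in the finite set of normalized vectors `X s / ‖X s‖` with
`s ∈ {-1,0,1}ⁿ` (the junk value `0` included). Hence the nonzero numbers `|xᵢᵀ u k|` are bounded
below by some `δ > 0` depending only on `X`. If `τ` and `γ` are small compared with `δ`, the
proximal and extrapolation terms cannot flip the sign of `xᵢᵀ u k`, so
`s (k+1) i = sgn (xᵢᵀ u k)` whenever `xᵢᵀ u k ≠ 0` (`sign_perturb`).

Consequently `F u = ‖Xᵀ u‖₁` satisfies `F (u k) = ⟨X s (k+1), u k⟩ ≤ ‖X s (k+1)‖ ≤ F (u (k+1))`,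
and equality forces `u (k+1) = u k` by the equality case of Cauchy–Schwarz (`step_eq`). As `F`
takes at most `M` values along the iteration, with `M` depending only on `X`, some
`u (k+1) = u k` occurs with `k ≤ M`. Then `e (k+1) = u k`, the sign step reproduces
`s (k+1)`, and everything is constant from there on; this gives the first-order condition.
Since `M` does not depend on `τ`, the step bound `4 Fmax / (τ (1 - γ))` exceeds `M` once `τ` is
small.
-/

open Matrix

noncomputable section

/-- Euclidean norm of a real vector. -/
def euclNorm {m : ℕ} (v : Fin m → ℝ) : ℝ := Real.sqrt (∑ i, v i ^ 2)

/-- L1 norm of a real vector. -/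
def l1Norm {m : ℕ} (v : Fin m → ℝ) : ℝ := ∑ i, |v i|

theorem euclNorm_nonneg' {m : ℕ} (v : Fin m → ℝ) : 0 ≤ euclNorm v := Real.sqrt_nonneg _

theorem euclNorm_sq {m : ℕ} (v : Fin m → ℝ) : euclNorm v ^ 2 = v ⬝ᵥ v := by
  unfold euclNorm
  rw [Real.sq_sqrt (Finset.sum_nonneg fun _ _ => sq_nonneg _)]
  simp [dotProduct, sq]

theorem euclNorm_eq_zero' {m : ℕ} {v : Fin m → ℝ} (h : euclNorm v = 0) : v = 0 := by
  rw [← dotProduct_self_eq_zero, ← euclNorm_sq, h]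
  norm_num

theorem euclNorm_zero' {m : ℕ} : euclNorm (0 : Fin m → ℝ) = 0 := by
  simp [euclNorm]

theorem dot_le_euclNorm {m : ℕ} (a b : Fin m → ℝ) :
    a ⬝ᵥ b ≤ euclNorm a * euclNorm b :=
  Real.sum_mul_le_sqrt_mul_sqrt _ _ _

theorem l1Norm_nonneg' {m : ℕ} (v : Fin m → ℝ) : 0 ≤ l1Norm v :=
  Finset.sum_nonneg fun _ _ => abs_nonneg _

theorem abs_le_l1Norm {m : ℕ} (v : Fin m → ℝ) (i : Fin m) : |v i| ≤ l1Norm v :=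
  Finset.single_le_sum (f := fun j => |v j|) (fun _ _ => abs_nonneg _) (Finset.mem_univ i)

theorem dot_transpose {d n : ℕ} (X : Matrix (Fin d) (Fin n) ℝ) (s : Fin n → ℝ)
    (u : Fin d → ℝ) : s ⬝ᵥ (Xᵀ *ᵥ u) = (X *ᵥ s) ⬝ᵥ u := by
  rw [Matrix.mulVec_transpose, dotProduct_comm, ← Matrix.dotProduct_mulVec, dotProduct_comm]

/-- The `u`-update `X s / ‖X s‖`; it is `0` when `X s = 0`. -/
def uStep {d n : ℕ} (X : Matrix (Fin d) (Fin n) ℝ) (s : Fin n → ℝ) : Fin d → ℝ :=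
  (euclNorm (X *ᵥ s))⁻¹ • (X *ᵥ s)

theorem dot_uStep {d n : ℕ} (X : Matrix (Fin d) (Fin n) ℝ) (s : Fin n → ℝ) :
    (X *ᵥ s) ⬝ᵥ uStep X s = euclNorm (X *ᵥ s) := by
  rw [uStep, dotProduct_smul, ← euclNorm_sq, smul_eq_mul]
  by_cases h : euclNorm (X *ᵥ s) = 0
  · simp [h]
  · field_simp

theorem euclNorm_smul_uStep {d n : ℕ} (X : Matrix (Fin d) (Fin n) ℝ) (s : Fin n → ℝ) :
    euclNorm (X *ᵥ s) • uStep X s = X *ᵥ s := by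
  by_cases h : euclNorm (X *ᵥ s) = 0
  · rw [h, euclNorm_eq_zero' h, zero_smul]
  · rw [uStep, smul_smul, mul_inv_cancel₀ h, one_smul]

theorem euclNorm_uStep {d n : ℕ} (X : Matrix (Fin d) (Fin n) ℝ) (s : Fin n → ℝ) :
    uStep X s = 0 ∨ euclNorm (uStep X s) = 1 := by
  by_cases h : euclNorm (X *ᵥ s) = 0
  · left
    simp [uStep, h]
  · right
    have h1 : euclNorm (uStep X s) ^ 2 = 1 := by
      rw [euclNorm_sq]
      conv_lhs => enter [1]; rw [uStep]
      rw [smul_dotProduct, dot_uStep, smul_eq_mul, inv_mul_cancel₀ h]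
    nlinarith [euclNorm_nonneg' (uStep X s)]

theorem euclNorm_le_l1Norm_uStep {d n : ℕ} (X : Matrix (Fin d) (Fin n) ℝ) (s : Fin n → ℝ)
    (hs : ∀ i, |s i| ≤ 1) : euclNorm (X *ᵥ s) ≤ l1Norm (Xᵀ *ᵥ uStep X s) := by
  rw [← dot_uStep, ← dot_transpose]
  refine Finset.sum_le_sum fun i _ => (le_abs_self _).trans ?_
  rw [abs_mul]
  exact mul_le_of_le_one_left (abs_nonneg _) (hs i)

theorem uStep_eq_zero_of_l1Norm {d n : ℕ} (X : Matrix (Fin d) (Fin n) ℝ) (s : Fin n → ℝ)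
    (hs : ∀ i, |s i| ≤ 1) (h : l1Norm (Xᵀ *ᵥ uStep X s) = 0) : uStep X s = 0 := by
  have h1 := euclNorm_le_l1Norm_uStep X s hs
  have h2 : euclNorm (X *ᵥ s) = 0 := le_antisymm (h ▸ h1) (euclNorm_nonneg' _)
  simp [uStep, h2]

/-- When `s` is a subgradient of `‖·‖₁` at `Xᵀ u`, the objective at `u` is at most `‖X s‖`. -/
theorem l1Norm_le_euclNorm {d n : ℕ} (X : Matrix (Fin d) (Fin n) ℝ) (s : Fin n → ℝ)
    (u : Fin d → ℝ) (hu : euclNorm u ≤ 1)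
    (hsu : ∀ i, s i * (Xᵀ *ᵥ u) i = |(Xᵀ *ᵥ u) i|) :
    l1Norm (Xᵀ *ᵥ u) = (X *ᵥ s) ⬝ᵥ u ∧ l1Norm (Xᵀ *ᵥ u) ≤ euclNorm (X *ᵥ s) := by
  have h : l1Norm (Xᵀ *ᵥ u) = (X *ᵥ s) ⬝ᵥ u := by
    rw [← dot_transpose]
    exact Finset.sum_congr rfl fun i _ => (hsu i).symm
  refine ⟨h, h ▸ (dot_le_euclNorm _ _).trans ?_⟩
  exact mul_le_of_le_one_right (euclNorm_nonneg' _) hu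

/-- A step that does not increase the objective leaves `u` unchanged: the equality case of
Cauchy–Schwarz. -/
theorem step_eq {d n : ℕ} (X : Matrix (Fin d) (Fin n) ℝ) (s : Fin n → ℝ)
    (u : Fin d → ℝ) (hs : ∀ i, |s i| ≤ 1) (hu : euclNorm u ≤ 1)
    (hu0 : l1Norm (Xᵀ *ᵥ u) = 0 → u = 0)
    (hsu : ∀ i, s i * (Xᵀ *ᵥ u) i = |(Xᵀ *ᵥ u) i|)
    (hle : l1Norm (Xᵀ *ᵥ uStep X s) ≤ l1Norm (Xᵀ *ᵥ u)) : uStep X s = u := by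
  obtain ⟨h1, h2⟩ := l1Norm_le_euclNorm X s u hu hsu
  have h3 := euclNorm_le_l1Norm_uStep X s hs
  by_cases h : euclNorm (X *ᵥ s) = 0
  · rw [hu0 (le_antisymm (h ▸ h2) (l1Norm_nonneg' _))]
    simp [uStep, h]
  · have h4 : (X *ᵥ s) ⬝ᵥ u = euclNorm (X *ᵥ s) := by linarith
    have h5 : uStep X s ⬝ᵥ u = 1 := by
      rw [uStep, smul_dotProduct, h4, smul_eq_mul, inv_mul_cancel₀ h]
    have h6 : uStep X s ⬝ᵥ uStep X s = 1 := by
      conv_lhs => enter [1]; rw [uStep]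
      rw [smul_dotProduct, dot_uStep, smul_eq_mul, inv_mul_cancel₀ h]
    have h7 : u ⬝ᵥ u ≤ 1 := by
      rw [← euclNorm_sq]
      nlinarith [euclNorm_nonneg' u]
    have h8 : euclNorm (uStep X s - u) ^ 2 ≤ 0 := by
      rw [euclNorm_sq, sub_dotProduct, dotProduct_sub, dotProduct_sub,
        dotProduct_comm u (uStep X s)]
      linarith
    have h9 : euclNorm (uStep X s - u) = 0 :=
      pow_eq_zero_iff two_ne_zero |>.1 (le_antisymm h8 (sq_nonneg _))
    exact sub_eq_zero.1 (euclNorm_eq_zero' h9)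

/-- A perturbation smaller than `|a|` does not change the sign of `a`. -/
theorem sign_perturb {a b : ℝ} (h : |b| < |a|) : Real.sign (b + a) = Real.sign a := by
  rcases lt_trichotomy a 0 with ha | ha | ha
  · rw [abs_of_neg ha, abs_lt] at h
    rw [Real.sign_of_neg ha, Real.sign_of_neg (by linarith)]
  · rw [ha, abs_zero] at h
    exact absurd h (not_lt.2 (abs_nonneg _))
  · rw [abs_of_pos ha, abs_lt] at h
    rw [Real.sign_of_pos ha, Real.sign_of_pos (by linarith)]

theorem sign_mul_eq_abs (a : ℝ) : Real.sign a * a = |a| := by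
  rcases lt_trichotomy a 0 with ha | ha | ha
  · rw [Real.sign_of_neg ha, abs_of_neg ha]; ring
  · simp [ha]
  · rw [Real.sign_of_pos ha, abs_of_pos ha]; ring

theorem sign_mem (a : ℝ) : Real.sign a ∈ ({-1, 0, 1} : Set ℝ) := by
  rcases Real.sign_apply_eq a with h | h | h <;> simp [h]

theorem abs_le_one_of_mem {a : ℝ} (h : a ∈ ({-1, 0, 1} : Set ℝ)) : |a| ≤ 1 := by
  simp only [Set.mem_insert_iff, Set.mem_singleton_iff] at h
  rcases h with h | h | h <;> simp [h]

theorem sign_mul_self_of_mem {τ a : ℝ} (hτ : 0 < τ) (h : a ∈ ({-1, 0, 1} : Set ℝ)) :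
    Real.sign (τ * a) = a := by
  simp only [Set.mem_insert_iff, Set.mem_singleton_iff] at h
  rcases h with h | h | h
  · rw [h, Real.sign_of_neg (by linarith)]
  · simp [h]
  · rw [h, Real.sign_of_pos (by linarith)]

/-- The ternary sign vectors `{-1,0,1}ⁿ`. -/
def ternary (n : ℕ) : Set (Fin n → ℝ) := {s | ∀ i, s i ∈ ({-1, 0, 1} : Set ℝ)}

theorem ternary_finite (n : ℕ) : (ternary n).Finite :=
  Set.Finite.pi' fun _ => Set.toFinite _

/-- A uniform gap below the nonzero values `|xᵢᵀ u|` over all possible iterates `u`. -/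
theorem exists_gap {d n : ℕ} (X : Matrix (Fin d) (Fin n) ℝ) :
    ∃ δ : ℝ, 0 < δ ∧ ∀ s ∈ ternary n, ∀ i, (Xᵀ *ᵥ uStep X s) i ≠ 0 →
      δ ≤ |(Xᵀ *ᵥ uStep X s) i| := by
  -- Zero values are replaced by the harmless positive number `1` before taking the minimum.
  let f : (Fin n → ℝ) × Fin n → ℝ := fun p =>
    if (Xᵀ *ᵥ uStep X p.1) p.2 = 0 then 1 else |(Xᵀ *ᵥ uStep X p.1) p.2|
  have hf : ∀ p, 0 < f p := by
    intro p
    by_cases h : (Xᵀ *ᵥ uStep X p.1) p.2 = 0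
    · simp [f, h]
    · simp [f, h]
  have hfin : (ternary n ×ˢ (Set.univ : Set (Fin n))).Finite :=
    (ternary_finite n).prod Set.finite_univ
  rcases (ternary n ×ˢ (Set.univ : Set (Fin n))).eq_empty_or_nonempty with he | hne
  · refine ⟨1, one_pos, fun s hs i _ => ?_⟩
    have : (s, i) ∈ ternary n ×ˢ (Set.univ : Set (Fin n)) := ⟨hs, trivial⟩
    rw [he] at this
    exact this.elim
  · obtain ⟨p, -, hp⟩ := Set.exists_min_image _ f hfin hne
    refine ⟨f p, hf p, fun s hs i hi => ?_⟩
    have := hp (s, i) ⟨hs, trivial⟩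
    simpa [f, hi] using this

/-- A sequence with values in a finite set `T` from index `1` on cannot increase strictly at
every index of `[1, #T]`. -/
theorem exists_stall {T : Finset ℝ} {a : ℕ → ℝ} (ha : ∀ k, 1 ≤ k → a k ∈ T) :
    ∃ k, 1 ≤ k ∧ k ≤ T.card ∧ a (k + 1) ≤ a k := by
  by_contra! h
  have hmono : ∀ j k, 1 ≤ j → j < k → k ≤ T.card + 1 → a j < a k := by
    intro j k hj hjk
    induction k, hjk using Nat.le_induction with
    | base => exact fun hk => h j hj (by omega)
    | succ k hk ih => exact fun hk' => (ih (by omega)).trans (h k (by omega) (by omega))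
  have hinj : Set.InjOn a (Finset.Icc 1 (T.card + 1) : Finset ℕ) := by
    intro j hj k hk hjk
    simp only [Finset.coe_Icc, Set.mem_Icc] at hj hk
    rcases lt_trichotomy j k with hlt | heq | hlt
    · exact absurd hjk (hmono j k hj.1 hlt hk.2).ne
    · exact heq
    · exact absurd hjk (hmono k j hk.1 hlt hj.2).ne'
  have hcard := Finset.card_le_card_of_injOn a
    (fun k hk => ha k (Finset.mem_Icc.1 hk).1) hinj
  simp at hcard

/-- Theorem 4.5 — finite-step convergence of S-PAMe in the K = 1 case,
with no rank assumption: there are thresholds γ̄ > 0 and τ₀ > 0 such that for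
0 ≤ γ < γ̄ and 0 < τ < τ₀ the iterates stop changing after at most
⌈4F^max/(τ(1−γ))⌉ steps, and the stopping point is a FOC point. -/
theorem spame_K1_finite_step_convergence {d n : ℕ}
    (X : Matrix (Fin d) (Fin n) ℝ)
    (Fmax : ℝ)
    (hFmax : IsGreatest
      {v : ℝ | ∃ w : Fin d → ℝ, euclNorm w = 1 ∧ l1Norm (Xᵀ.mulVec w) = v} Fmax) :
    ∃ γbar : ℝ, 0 < γbar ∧ ∃ τ₀ : ℝ, 0 < τ₀ ∧
      ∀ τ γ : ℝ, 0 < τ → τ < τ₀ → 0 ≤ γ → γ < 1 → γ < γbar →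
      ∀ (s : ℕ → Fin n → ℝ) (u e : ℕ → Fin d → ℝ),
        euclNorm (u 0) = 1 →
        l1Norm (Xᵀ.mulVec (u 0)) ≠ 0 →
        (∀ i, s 0 i ∈ ({-1, 0, 1} : Set ℝ)) →
        e 0 = u 0 →
        (∀ k i, s (k + 1) i = Real.sign (τ * s k i + Xᵀ.mulVec (e k) i)) →
        (∀ k, u (k + 1) = (euclNorm (X.mulVec (s (k + 1))))⁻¹ • X.mulVec (s (k + 1))) →
        (∀ k, e (k + 1) = u (k + 1) - γ • (u k - u (k + 1))) →
        ∀ N : ℕ, N = ⌈4 * Fmax / (τ * (1 - γ))⌉₊ →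
          (∀ k, N ≤ k → u k = u N ∧ s k = s N) ∧
          ∃ sstar : Fin n → ℝ,
            (∀ i, (Xᵀ.mulVec (u N) i ≠ 0 → sstar i = Real.sign (Xᵀ.mulVec (u N) i)) ∧
              sstar i ∈ Set.Icc (-1 : ℝ) 1) ∧
            ∃ h : ℝ, 0 ≤ h ∧ X.mulVec sstar = h • u N := by
  obtain ⟨δ, hδ, hgap⟩ := exists_gap X
  have hF0 : 0 ≤ Fmax := by
    obtain ⟨w, -, hw⟩ := hFmax.1
    exact hw ▸ l1Norm_nonneg' _
  let T : Finset ℝ :=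
    ((ternary_finite n).image fun s => l1Norm (Xᵀ *ᵥ uStep X s)).toFinset
  -- `2 Fmax` bounds `|xᵢᵀ (u (k-1) - u k)|`, so these thresholds keep the perturbation below `δ`.
  -- If `Fmax = 0` there is no admissible `u 0`, and the value of `τ₀` is immaterial.
  refine ⟨δ / (4 * (Fmax + 1)), by positivity,
    if Fmax = 0 then 1 else min (δ / 2) (4 * Fmax / (T.card + 1)), ?_, ?_⟩
  · split_ifs with h
    · exact one_pos
    · have : 0 < Fmax := lt_of_le_of_ne hF0 (Ne.symm h)
      positivity
  intro τ γ hτ hτ0 hγ0 hγ1 hγ s u e hu0 hl0 hs0 he0 hs hu he N hN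
  have hFle : ∀ w : Fin d → ℝ, euclNorm w = 1 → l1Norm (Xᵀ *ᵥ w) ≤ Fmax :=
    fun w hw => hFmax.2 ⟨w, hw, rfl⟩
  have hFpos : 0 < Fmax :=
    (lt_of_le_of_ne (l1Norm_nonneg' _) (Ne.symm hl0)).trans_le (hFle _ hu0)
  rw [if_neg hFpos.ne', lt_min_iff] at hτ0
  obtain ⟨hτδ, hτM⟩ := hτ0
  have hNM : T.card + 1 ≤ N := by
    have h1 : 0 < τ * (1 - γ) := mul_pos hτ (by linarith)
    have h2 : ((T.card + 1 : ℕ) : ℝ) ≤ 4 * Fmax / (τ * (1 - γ)) := by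
      rw [lt_div_iff₀ (by positivity)] at hτM
      rw [le_div_iff₀ h1]
      push_cast
      nlinarith [mul_nonneg (mul_nonneg hτ.le hγ0) (Nat.cast_nonneg (α := ℝ) T.card),
        mul_nonneg hτ.le hγ0]
    rw [hN]
    exact_mod_cast h2.trans (Nat.le_ceil _)
  have hsm : ∀ k, s k ∈ ternary n := by
    intro k i
    cases k with
    | zero => exact hs0 i
    | succ k => rw [hs k i]; exact sign_mem _
  have hs1 : ∀ k i, |s k i| ≤ 1 := fun k i => abs_le_one_of_mem (hsm k i)
  have hu' : ∀ k, u (k + 1) = uStep X (s (k + 1)) := hu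
  have hnorm : ∀ k, u k = 0 ∨ euclNorm (u k) = 1 := by
    intro k
    cases k with
    | zero => exact Or.inr hu0
    | succ k => rw [hu']; exact euclNorm_uStep _ _
  have hnorm1 : ∀ k, euclNorm (u k) ≤ 1 := by
    intro k
    rcases hnorm k with h | h
    · rw [h, euclNorm_zero']; exact zero_le_one
    · exact h.le
  have hFk : ∀ k i, |(Xᵀ *ᵥ u k) i| ≤ Fmax := by
    intro k i
    rcases hnorm k with h | h
    · simpa [h] using hF0
    · exact (abs_le_l1Norm _ i).trans (hFle _ h)
  -- The sign step sees the true sign of every nonzero `xᵢᵀ u (k+1)`.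
  have hsign : ∀ k i, (Xᵀ *ᵥ u (k + 1)) i ≠ 0 →
      s (k + 2) i = Real.sign ((Xᵀ *ᵥ u (k + 1)) i) := by
    intro k i hi
    have hδi : δ ≤ |(Xᵀ *ᵥ u (k + 1)) i| := by
      rw [hu'] at hi ⊢
      exact hgap _ (hsm _) i hi
    have hexp : τ * s (k + 1) i + (Xᵀ *ᵥ e (k + 1)) i =
        (τ * s (k + 1) i - γ * ((Xᵀ *ᵥ u k) i - (Xᵀ *ᵥ u (k + 1)) i))
          + (Xᵀ *ᵥ u (k + 1)) i := by
      rw [he, Matrix.mulVec_sub, Matrix.mulVec_smul, Matrix.mulVec_sub]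
      simp only [Pi.sub_apply, Pi.smul_apply, smul_eq_mul]
      ring
    rw [hs (k + 1) i, hexp]
    refine sign_perturb (lt_of_lt_of_le ?_ hδi)
    have h1 : |τ * s (k + 1) i| ≤ τ := by
      rw [abs_mul, abs_of_pos hτ]
      exact mul_le_of_le_one_right hτ.le (hs1 _ i)
    have h2 : |γ * ((Xᵀ *ᵥ u k) i - (Xᵀ *ᵥ u (k + 1)) i)| ≤ γ * (2 * Fmax) := by
      rw [abs_mul, abs_of_nonneg hγ0]
      refine mul_le_mul_of_nonneg_left ((abs_sub _ _).trans ?_) hγ0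
      linarith [hFk k i, hFk (k + 1) i]
    have h3 : γ * (4 * (Fmax + 1)) < δ := by
      rwa [lt_div_iff₀ (by positivity)] at hγ
    have h4 := abs_sub (τ * s (k + 1) i) (γ * ((Xᵀ *ᵥ u k) i - (Xᵀ *ᵥ u (k + 1)) i))
    nlinarith
  have hsub : ∀ k i, s (k + 2) i * (Xᵀ *ᵥ u (k + 1)) i = |(Xᵀ *ᵥ u (k + 1)) i| := by
    intro k i
    by_cases hi : (Xᵀ *ᵥ u (k + 1)) i = 0
    · simp [hi]
    · rw [hsign k i hi, sign_mul_eq_abs]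
  obtain ⟨K, hK1, hKT, hK⟩ := exists_stall (T := T) (a := fun k => l1Norm (Xᵀ *ᵥ u k)) (by
    intro k hk
    obtain ⟨j, rfl⟩ := Nat.exists_eq_add_of_le' hk
    simp only [T, Set.Finite.mem_toFinset]
    exact ⟨s (j + 1), hsm _, by rw [hu']⟩)
  obtain ⟨j, rfl⟩ := Nat.exists_eq_add_of_le' hK1
  have hstall : u (j + 2) = u (j + 1) := by
    rw [hu' (j + 1)]
    refine step_eq X (s (j + 2)) (u (j + 1)) (hs1 _) (hnorm1 _) ?_ (hsub j) ?_
    · rw [hu' j]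
      exact uStep_eq_zero_of_l1Norm X _ (hs1 _)
    · rw [← hu' (j + 1)]
      exact hK
  -- Two equal consecutive `u` make the next pair `(u, s)` repeat as well.
  have hnext : ∀ k, u (k + 2) = u (k + 1) → s (k + 3) = s (k + 2) ∧ u (k + 3) = u (k + 2) := by
    intro k hk
    have hs3 : s (k + 3) = s (k + 2) := by
      funext i
      by_cases hi : (Xᵀ *ᵥ u (k + 1)) i = 0
      · rw [hs (k + 2) i, he, hk, sub_self, smul_zero, sub_zero, hi, add_zero,
          sign_mul_self_of_mem hτ (hsm _ i)]
      · rw [hsign (k + 1) i (by rwa [hk]), hk, hsign k i hi]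
    exact ⟨hs3, by rw [hu' (k + 2), hs3, ← hu' (k + 1)]⟩
  have hconst : ∀ m, u (j + m + 2) = u (j + m + 1) ∧ u (j + m + 2) = u (j + 2) ∧
      s (j + m + 2) = s (j + 2) := by
    intro m
    induction m with
    | zero => exact ⟨hstall, rfl, rfl⟩
    | succ m ih =>
      obtain ⟨h1, h2⟩ := hnext (j + m) ih.1
      exact ⟨h2, h2.trans ih.2.1, h1.trans ih.2.2⟩
  have hfix : ∀ k, j + 2 ≤ k → u k = u (j + 2) ∧ s k = s (j + 2) := by
    intro k hk
    obtain ⟨m, rfl⟩ := Nat.exists_eq_add_of_le hk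
    have := (hconst m).2
    rwa [show j + m + 2 = j + 2 + m by ring] at this
  have hjN : j + 2 ≤ N := by omega
  refine ⟨fun k hk => ⟨(hfix k (hjN.trans hk)).1.trans (hfix N hjN).1.symm,
    (hfix k (hjN.trans hk)).2.trans (hfix N hjN).2.symm⟩, s (j + 2), ?_,
    euclNorm (X *ᵥ s (j + 2)), euclNorm_nonneg' _, ?_⟩
  · intro i
    refine ⟨fun hi => ?_, abs_le.1 (hs1 _ i)⟩
    rw [(hfix N hjN).1, hstall] at hi ⊢
    exact hsign j i hi
  · rw [(hfix N hjN).1, hu' (j + 1)]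
    exact (euclNorm_smul_uStep X _).symm
end
end
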